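/- Let S = {1234, 1432, 2143, 2341, 3214, 3412, 4123, 4321}. For every permuton μ it holds that Σ_{π∈S} d(π,μ) ≥ 1/3, and equality holds if and only if μ is the uniform permuton. -/

import Mathlib

open MeasureTheory Filter

noncomputable section

/-- A permuton: a Borel probability measure on `ℝ × ℝ` (supported on `[0,1]²`)
with uniform marginals. -/
def IsPermuton (μ : Measure (ℝ × ℝ)) : Prop :=
  IsProbabilityMeasure μ ∧
    (∀ x x' : ℝ, 0 ≤ x → x ≤ x' → x' ≤ 1 →
      μ (Set.Icc x x' ×ˢ Set.Icc (0 : ℝ) 1) = ENNReal.ofReal (x' - x)) ∧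
    (∀ y y' : ℝ, 0 ≤ y → y ≤ y' → y' ≤ 1 →
      μ (Set.Icc (0 : ℝ) 1 ×ˢ Set.Icc y y') = ENNReal.ofReal (y' - y))

/-- The uniform permuton: two-dimensional Lebesgue measure on `[0,1]²`. -/
def uniformPermuton : Measure (ℝ × ℝ) :=
  volume.restrict (Set.Icc (0 : ℝ) 1 ×ˢ Set.Icc (0 : ℝ) 1)

/-- The support of a Borel measure: all points each of whose open neighbourhoods has
positive measure. -/
def measSupport (μ : Measure (ℝ × ℝ)) : Set (ℝ × ℝ) :=
  {p | ∀ U : Set (ℝ × ℝ), IsOpen U → p ∈ U → 0 < μ U}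

/-- The pattern density of a `k`-permutation `π` in a measure `μ` on `ℝ × ℝ`:
the `μ^{⊗ k}`-probability that `k` sampled points, relabelled so that their
`x`-coordinates increase, have `y`-coordinates ordered according to `π`. -/
def PermutonDensity {k : ℕ} (π : Equiv.Perm (Fin k)) (μ : Measure (ℝ × ℝ)) : ℝ :=
  ((Measure.pi fun _ : Fin k => μ)
    {p : Fin k → ℝ × ℝ | ∃ σ : Equiv.Perm (Fin k),
      StrictMono (fun i => (p (σ i)).1) ∧
        ∀ i j : Fin k, (p (σ i)).2 < (p (σ j)).2 ↔ π i < π j}).toReal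

open scoped Classical in
/-- The pattern density of a `k`-permutation `π` in an `n`-permutation `Π`:
the proportion of `k`-element subsets of `Fin n` on which `Π` induces the pattern `π`
(zero when `n < k`). -/
def PatternDensity {k n : ℕ} (π : Equiv.Perm (Fin k)) (Perm : Equiv.Perm (Fin n)) : ℝ :=
  ((Finset.univ.filter fun A : Finset (Fin n) =>
      ∃ h : A.card = k, ∀ i j : Fin k,
        Perm ↑(A.orderIsoOfFin h i) < Perm ↑(A.orderIsoOfFin h j) ↔ π i < π j).card : ℝ) /
    (n.choose k)

/-- A sequence of permutations (of varying orders) is quasirandom if the density of every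
pattern `π` converges to `1/|π|!`. -/
def Quasirandom (P : ℕ → (n : ℕ) × Equiv.Perm (Fin n)) : Prop :=
  ∀ (k : ℕ) (π : Equiv.Perm (Fin k)),
    Tendsto (fun i => PatternDensity π (P i).2) atTop (nhds (1 / (Nat.factorial k : ℝ)))

/-- A set `S` of `k`-permutations is `Σ`-forcing if a sequence of permutations is quasirandom
exactly when the sum of the densities of the patterns from `S` converges to `|S|/k!`. -/
def SigmaForcing {k : ℕ} (S : Finset (Equiv.Perm (Fin k))) : Prop :=
  ∀ P : ℕ → (n : ℕ) × Equiv.Perm (Fin n),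
    Quasirandom P ↔
      Tendsto (fun i => ∑ π ∈ S, PatternDensity π (P i).2) atTop
        (nhds ((S.card : ℝ) / (Nat.factorial k : ℝ)))

/-- The `4`-permutation written in one-line notation as `(a+1)(b+1)(c+1)(d+1)`
(inputs are 0-indexed). -/
def mk4 (a b c d : Fin 4) (h : Function.Bijective ![a, b, c, d] := by decide) :
    Equiv.Perm (Fin 4) :=
  Equiv.ofBijective _ h

/-- A doubly stochastic matrix: non-negative entries, all row and column sums equal to one. -/
def IsDoublyStochastic {n : ℕ} (A : Matrix (Fin n) (Fin n) ℝ) : Prop :=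
  (∀ i j, 0 ≤ A i j) ∧ (∀ i, ∑ j, A i j = 1) ∧ (∀ j, ∑ i, A i j = 1)

/-- The step permuton `μ[A]` associated with an `n × n` doubly stochastic matrix `A`. -/
def stepPermuton {n : ℕ} (A : Matrix (Fin n) (Fin n) ℝ) : Measure (ℝ × ℝ) :=
  ∑ i : Fin n, ∑ j : Fin n,
    ENNReal.ofReal (A i j * n) •
      volume.restrict
        (Set.Ico ((i : ℝ) / n) (((i : ℝ) + 1) / n) ×ˢ
          Set.Ico ((j : ℝ) / n) (((j : ℝ) + 1) / n))

/-- The matrix `B^{ij}` (0-indexed: `p, q ∈ [n-1]`): `+1` at positions `(p,q)` and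
`(p+1,q+1)`, `-1` at positions `(p,q+1)` and `(p+1,q)`, `0` elsewhere. -/
def Bmat (n : ℕ) (p q : Fin (n - 1)) : Matrix (Fin n) (Fin n) ℝ := fun a b =>
  (if (a : ℕ) = (p : ℕ) ∧ (b : ℕ) = (q : ℕ) then 1 else 0) +
    (if (a : ℕ) = (p : ℕ) + 1 ∧ (b : ℕ) = (q : ℕ) + 1 then 1 else 0) -
    (if (a : ℕ) = (p : ℕ) ∧ (b : ℕ) = (q : ℕ) + 1 then 1 else 0) -
    (if (a : ℕ) = (p : ℕ) + 1 ∧ (b : ℕ) = (q : ℕ) then 1 else 0)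

/-- The matrix `A + ∑_{i,j} x_{ij} B^{ij}` where `A` is the `n × n` matrix with all
entries `1/n`. -/
def pertMatrix (n : ℕ) (x : Fin (n - 1) × Fin (n - 1) → ℝ) : Matrix (Fin n) (Fin n) ℝ :=
  fun a b => 1 / n + ∑ p : Fin (n - 1) × Fin (n - 1), x p * Bmat n p.1 p.2 a b

/-- The function `h_{S,n}`: the sum over `π ∈ S` of the pattern density of `π` in the
step permuton of the perturbed matrix. -/
def hSN (n : ℕ) (S : Finset (Equiv.Perm (Fin 4))) (x : Fin (n - 1) × Fin (n - 1) → ℝ) : ℝ :=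
  ∑ π ∈ S, PermutonDensity π (stepPermuton (pertMatrix n x))

open scoped Classical in
/-- The cover matrix of a set `S` of `4`-permutations: `C i j` is the number of `π ∈ S`
with `π j = i`. -/
def coverMatrix (S : Finset (Equiv.Perm (Fin 4))) : Fin 4 → Fin 4 → ℕ := fun i j =>
  (S.filter fun π => π j = i).card

/-- The eight symmetry operations on `4`-permutations. -/
def symOps : List (Equiv.Perm (Fin 4) → Equiv.Perm (Fin 4)) :=
  [fun σ => σ,
   fun σ => σ * Fin.revPerm,
   fun σ => Fin.revPerm * σ,
   fun σ => Fin.revPerm * σ * Fin.revPerm,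
   fun σ => σ⁻¹,
   fun σ => σ⁻¹ * Fin.revPerm,
   fun σ => Fin.revPerm * σ⁻¹,
   fun σ => Fin.revPerm * σ⁻¹ * Fin.revPerm]

open scoped Classical in
/-- `T` is symmetric to `S` if one of the eight symmetry operations maps `S` onto `T`. -/
def SymmetricSets (S T : Finset (Equiv.Perm (Fin 4))) : Prop :=
  ∃ op ∈ symOps, T = S.image op

end

/-!
The eight patterns are the symmetries of a square. Four points of a circle can be paired into two
chords in three ways, exactly one of which makes the chords cross. Four sampled points are thus
paired by their `x`-coordinates and by their `y`-coordinates, and their pattern is one of the eight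
iff the two pairings agree. Hence the sum of the densities is `3` times the probability that the
chords `01` and `23` cross in both coordinates.

Crossing of two chords is the square of a mixed second difference of the sawtooth `s` (that is,
`s t = t - 1 / 2` on `(0, 1)`, extended with period `1`). The function `s ^ 2` is affine in the
convolution square of `s`, so the integral of the product of two such squares is a constant plus a
combination with positive coefficients of integrals of squares of the correlation
`D x y = ∫ s (x - u) * s (y - v) dμ(u, v)` and of its second differences. For uniform `μ` all of
these vanish. Conversely equality forces `D = 0` on `[0, 1]²`, and since the indicator of
`[0, x]` is a combination of a constant and two translates of `s`, this determines the mass of every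
quadrant.
-/

section BoundedMeasurable

/-- Measurability together with a uniform bound: the class of integrands of this file. It is closed
under products and under integration in one variable, and refers to no measure. -/
def BoundedMeasurable {α : Type*} [MeasurableSpace α] (f : α → ℝ) : Prop :=
  Measurable f ∧ ∃ C : ℝ, ∀ x, |f x| ≤ C

variable {α β γ : Type*} [MeasurableSpace α] [MeasurableSpace β] [MeasurableSpace γ] {f g : α → ℝ}

namespace BoundedMeasurable

theorem const (c : ℝ) : BoundedMeasurable fun _ : α ↦ c :=
  ⟨measurable_const, |c|, fun _ ↦ le_rfl⟩

theorem add (hf : BoundedMeasurable f) (hg : BoundedMeasurable g) :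
    BoundedMeasurable fun x ↦ f x + g x := by
  obtain ⟨hf, C, hC⟩ := hf
  obtain ⟨hg, D, hD⟩ := hg
  exact ⟨hf.add hg, C + D, fun x ↦ (abs_add_le _ _).trans (add_le_add (hC x) (hD x))⟩

theorem mul (hf : BoundedMeasurable f) (hg : BoundedMeasurable g) :
    BoundedMeasurable fun x ↦ f x * g x := by
  obtain ⟨hf, C, hC⟩ := hf
  obtain ⟨hg, D, hD⟩ := hg
  refine ⟨hf.mul hg, C * D, fun x ↦ ?_⟩
  rw [abs_mul]
  exact mul_le_mul (hC x) (hD x) (abs_nonneg _) ((abs_nonneg _).trans (hC x))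

theorem sub (hf : BoundedMeasurable f) (hg : BoundedMeasurable g) :
    BoundedMeasurable fun x ↦ f x - g x := by
  simpa only [neg_one_mul, sub_eq_add_neg] using hf.add ((const (-1)).mul hg)

theorem sq (hf : BoundedMeasurable f) : BoundedMeasurable fun x ↦ f x ^ 2 := by
  simpa only [pow_two] using hf.mul hf

theorem comp (hf : BoundedMeasurable f) {k : β → α} (hk : Measurable k) :
    BoundedMeasurable fun x ↦ f (k x) :=
  ⟨hf.1.comp hk, hf.2.imp fun _ hC x ↦ hC (k x)⟩

theorem comp₂ {F : α → β → ℝ} (hF : BoundedMeasurable (Function.uncurry F)) {k : γ → α}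
    {l : γ → β} (hk : Measurable k) (hl : Measurable l) :
    BoundedMeasurable fun x ↦ F (k x) (l x) :=
  hF.comp (hk.prodMk hl)

theorem integrable (hf : BoundedMeasurable f) (μ : Measure α) [IsFiniteMeasure μ] :
    Integrable f μ := by
  obtain ⟨hf, C, hC⟩ := hf
  exact .of_bound hf.aestronglyMeasurable C (.of_forall hC)

theorem integral {F : α → β → ℝ} (hF : BoundedMeasurable (Function.uncurry F))
    (μ : Measure β) [IsFiniteMeasure μ] : BoundedMeasurable fun x ↦ ∫ y, F x y ∂μ := by
  obtain ⟨hF, C, hC⟩ := hF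
  refine ⟨hF.stronglyMeasurable.integral_prod_right.measurable, C * μ.real Set.univ, fun x ↦ ?_⟩
  rw [← Real.norm_eq_abs]
  exact norm_integral_le_of_norm_le_const (.of_forall fun y ↦ hC (x, y))

theorem integral_comp (hf : BoundedMeasurable f) {k : β → α} {ν : Measure β} {μ : Measure α}
    (hk : MeasurePreserving k ν μ) : ∫ x, f (k x) ∂ν = ∫ x, f x ∂μ := by
  rw [← hk.map_eq, integral_map hk.aemeasurable hf.1.aestronglyMeasurable]

end BoundedMeasurable

end BoundedMeasurable

section HasIntegral

/-- `f` is integrable with integral `v`: the analogue of `HasSum`, which lets a linear combination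
of functions be integrated term by term without separate integrability side goals. -/
def HasIntegral {α : Type*} [MeasurableSpace α] (f : α → ℝ) (v : ℝ) (μ : Measure α) : Prop :=
  Integrable f μ ∧ ∫ x, f x ∂μ = v

variable {α β : Type*} [MeasurableSpace α] [MeasurableSpace β] {μ : Measure α} {ν : Measure β}
  {f g : α → ℝ} {v w : ℝ}

theorem BoundedMeasurable.hasIntegral (hf : BoundedMeasurable f) (μ : Measure α)
    [IsFiniteMeasure μ] : HasIntegral f (∫ x, f x ∂μ) μ :=
  ⟨hf.integrable μ, rfl⟩

namespace HasIntegral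

theorem const (μ : Measure α) [IsProbabilityMeasure μ] (c : ℝ) :
    HasIntegral (fun _ ↦ c) c μ :=
  ⟨integrable_const c, by simp⟩

theorem add (hf : HasIntegral f v μ) (hg : HasIntegral g w μ) :
    HasIntegral (fun x ↦ f x + g x) (v + w) μ :=
  ⟨hf.1.add hg.1, by rw [integral_add hf.1 hg.1, hf.2, hg.2]⟩

theorem sub (hf : HasIntegral f v μ) (hg : HasIntegral g w μ) :
    HasIntegral (fun x ↦ f x - g x) (v - w) μ :=
  ⟨hf.1.sub hg.1, by rw [integral_sub hf.1 hg.1, hf.2, hg.2]⟩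

theorem const_mul (c : ℝ) (hf : HasIntegral f v μ) :
    HasIntegral (fun x ↦ c * f x) (c * v) μ :=
  ⟨hf.1.const_mul c, by rw [integral_const_mul, hf.2]⟩

theorem mul_prod [SFinite μ] [SFinite ν] {g : β → ℝ} (hf : HasIntegral f v μ)
    (hg : HasIntegral g w ν) :
    HasIntegral (fun z : α × β ↦ f z.1 * g z.2) (v * w) (μ.prod ν) :=
  ⟨hf.1.mul_prod hg.1, by rw [integral_prod_mul, hf.2, hg.2]⟩

theorem congr_ae (hf : HasIntegral f v μ) (h : f =ᵐ[μ] g) : HasIntegral g v μ :=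
  ⟨hf.1.congr h, by rw [← integral_congr_ae h, hf.2]⟩

theorem congr (hf : HasIntegral f v μ) (h : ∀ x, f x = g x) (hv : v = w) :
    HasIntegral g w μ :=
  hv ▸ hf.congr_ae (.of_forall h)

end HasIntegral

end HasIntegral

section SawtoothKernel

variable {α : Type*} [MeasurableSpace α] {μ : Measure α}

theorem hasIntegral_sq_sub_mul_sq_sub [IsProbabilityMeasure μ] {U V : α → ℝ}
    (hU : BoundedMeasurable U) (hV : BoundedMeasurable V) (hU₀ : ∫ x, U x ∂μ = 0)
    (hV₀ : ∫ x, V x ∂μ = 0) :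
    HasIntegral (fun z : α × α ↦ (U z.1 - U z.2) ^ 2 * (V z.1 - V z.2) ^ 2)
      (2 * ∫ x, U x ^ 2 * V x ^ 2 ∂μ + 2 * ((∫ x, U x ^ 2 ∂μ) * ∫ x, V x ^ 2 ∂μ)
        + 4 * (∫ x, U x * V x ∂μ) ^ 2) (μ.prod μ) := by
  have one : HasIntegral (fun _ ↦ (1 : ℝ)) 1 μ := .const μ 1
  have u : HasIntegral U 0 μ := ⟨hU.integrable μ, hU₀⟩
  have v : HasIntegral V 0 μ := ⟨hV.integrable μ, hV₀⟩
  have uv := (hU.mul hV).hasIntegral μ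
  have uu := hU.sq.hasIntegral μ
  have vv := hV.sq.hasIntegral μ
  have uuv := (hU.sq.mul hV).hasIntegral μ
  have uvv := (hU.mul hV.sq).hasIntegral μ
  have uuvv := (hU.sq.mul hV.sq).hasIntegral μ
  have diagonal := (uuvv.mul_prod one).add (one.mul_prod uuvv)
  have balanced := ((uu.mul_prod vv).add (vv.mul_prod uu)).add ((uv.mul_prod uv).const_mul 4)
  have centered := ((uuv.mul_prod v).add (uvv.mul_prod u)).add
    ((u.mul_prod uvv).add (v.mul_prod uuv))
  exact ((diagonal.add balanced).sub (centered.const_mul 2)).congr (fun z ↦ by ring) (by ring)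

/-- The second mixed difference of a kernel. -/
def crossDiff {α : Type*} (X : α → α → ℝ) (z w : α × α) : ℝ :=
  X z.1 w.1 - X z.2 w.1 - X z.1 w.2 + X z.2 w.2

/-- The inner product of two rows of two kernels, that is, an entry of the matrix product of `X`
and the transpose of `Y`. -/
noncomputable def rowInner (μ : Measure α) (X Y : α → α → ℝ) (p q : α) : ℝ :=
  ∫ r, X p r * Y q r ∂μ

/-- A bounded kernel satisfying the identities, with respect to `μ`, of the sawtooth
`(x, y) ↦ (x - y) - ⌊x - y⌋ - 1 / 2` on the unit interval, for which `κ = 1 / 12`. Its crucial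
property `sq_ae` makes `X ^ 2` an affine function of the matrix product of `X` and its
transpose. -/
structure IsSawtoothKernel (μ : Measure α) (κ : ℝ) (X : α → α → ℝ) : Prop where
  boundedMeasurable : BoundedMeasurable (Function.uncurry X)
  antisymm : ∀ p q, X p q = -X q p
  integral_eq_zero : ∀ p, ∫ q, X p q ∂μ = 0
  sq_ae : ∀ p, ∀ᵐ q ∂μ, X p q ^ 2 = κ + 2 * rowInner μ X X p q

theorem boundedMeasurable_rowInner [IsFiniteMeasure μ] {X Y : α → α → ℝ}
    (hX : BoundedMeasurable (Function.uncurry X)) (hY : BoundedMeasurable (Function.uncurry Y)) :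
    BoundedMeasurable (Function.uncurry (rowInner μ X Y)) :=
  .integral (F := fun (z : α × α) r ↦ X z.1 r * Y z.2 r)
    ((hX.comp₂ (by fun_prop) (by fun_prop)).mul (hY.comp₂ (by fun_prop) (by fun_prop))) μ

theorem integral_rowInner_mul_rowInner [IsFiniteMeasure μ] {X Y : α → α → ℝ}
    (hX : BoundedMeasurable (Function.uncurry X)) (hY : BoundedMeasurable (Function.uncurry Y)) :
    ∫ z : α × α, rowInner μ X X z.1 z.2 * rowInner μ Y Y z.1 z.2 ∂(μ.prod μ) =
      ∫ z : α × α, (∫ p, X p z.1 * Y p z.2 ∂μ) ^ 2 ∂(μ.prod μ) := by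
  have hF : BoundedMeasurable (Function.uncurry fun z w : α × α ↦
      (X z.1 w.1 * X z.2 w.1) * (Y z.1 w.2 * Y z.2 w.2)) :=
    ((hX.comp₂ (by fun_prop) (by fun_prop)).mul (hX.comp₂ (by fun_prop) (by fun_prop))).mul
      ((hY.comp₂ (by fun_prop) (by fun_prop)).mul (hY.comp₂ (by fun_prop) (by fun_prop)))
  calc
    _ = ∫ z : α × α, ∫ w : α × α,
          (X z.1 w.1 * X z.2 w.1) * (Y z.1 w.2 * Y z.2 w.2) ∂(μ.prod μ) ∂(μ.prod μ) := by
      simp_rw [rowInner, ← integral_prod_mul]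
    _ = ∫ w : α × α, ∫ z : α × α,
          (X z.1 w.1 * X z.2 w.1) * (Y z.1 w.2 * Y z.2 w.2) ∂(μ.prod μ) ∂(μ.prod μ) :=
      integral_integral_swap (hF.integrable _)
    _ = ∫ w : α × α, ∫ z : α × α,
          (X z.1 w.1 * Y z.1 w.2) * (X z.2 w.1 * Y z.2 w.2) ∂(μ.prod μ) ∂(μ.prod μ) := by
      simp_rw [mul_mul_mul_comm]
    _ = _ := by
      simp_rw [pow_two, ← integral_prod_mul]

namespace IsSawtoothKernel

variable {κ κ' : ℝ} {X Y : α → α → ℝ}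

theorem comp {β : Type*} [MeasurableSpace β] {μ' : Measure β} {u : β → α}
    (hX : IsSawtoothKernel μ κ X) (hu : MeasurePreserving u μ' μ) :
    IsSawtoothKernel μ' κ fun p q ↦ X (u p) (u q) where
  boundedMeasurable := hX.boundedMeasurable.comp₂ (hu.measurable.comp measurable_fst)
    (hu.measurable.comp measurable_snd)
  antisymm p q := hX.antisymm (u p) (u q)
  integral_eq_zero p := by
    have hbdd : BoundedMeasurable (X (u p)) :=
      hX.boundedMeasurable.comp₂ (by fun_prop) (by fun_prop)
    rw [hbdd.integral_comp hu, hX.integral_eq_zero]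
  sq_ae p := by
    filter_upwards [hu.quasiMeasurePreserving.ae (hX.sq_ae (u p))] with q hq
    have hbdd : BoundedMeasurable fun r ↦ X (u p) r * X (u q) r :=
      (hX.boundedMeasurable.comp₂ (by fun_prop) (by fun_prop)).mul
        (hX.boundedMeasurable.comp₂ (by fun_prop) (by fun_prop))
    rw [hq, rowInner, rowInner, hbdd.integral_comp hu]

theorem boundedMeasurable_right (hX : IsSawtoothKernel μ κ X) (p : α) :
    BoundedMeasurable (X p) :=
  hX.boundedMeasurable.comp₂ (by fun_prop) (by fun_prop)

variable [IsProbabilityMeasure μ]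

theorem hasIntegral_rowInner (hX : BoundedMeasurable (Function.uncurry X))
    (hY : IsSawtoothKernel μ κ' Y) (p : α) : HasIntegral (rowInner μ X Y p) 0 μ := by
  refine ⟨((boundedMeasurable_rowInner hX hY.boundedMeasurable).comp₂ (by fun_prop)
    (by fun_prop)).integrable μ, ?_⟩
  have integral_left_eq_zero (r : α) : ∫ q, Y q r ∂μ = 0 := by
    simp_rw [hY.antisymm _ r, integral_neg, hY.integral_eq_zero, neg_zero]
  have hF : BoundedMeasurable (Function.uncurry fun q r ↦ X p r * Y q r) :=
    (hX.comp₂ measurable_const measurable_snd).mul hY.boundedMeasurable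
  simp_rw [rowInner]
  rw [integral_integral_swap (hF.integrable _)]
  simp_rw [integral_const_mul, integral_left_eq_zero, mul_zero, integral_zero]

theorem integral_sq (hX : IsSawtoothKernel μ κ X) (p : α) : ∫ q, X p q ^ 2 ∂μ = κ := by
  rw [integral_congr_ae (hX.sq_ae p),
    ((HasIntegral.const μ κ).add ((hasIntegral_rowInner hX.boundedMeasurable hX p).const_mul 2)).2]
  ring

theorem hasIntegral_rowInner_prod (hX : IsSawtoothKernel μ κ X) :
    HasIntegral (fun z : α × α ↦ rowInner μ X X z.1 z.2) 0 (μ.prod μ) := by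
  have hint : Integrable (fun z : α × α ↦ rowInner μ X X z.1 z.2) (μ.prod μ) :=
    (boundedMeasurable_rowInner hX.boundedMeasurable hX.boundedMeasurable).integrable _
  refine ⟨hint, ?_⟩
  rw [integral_prod _ hint]
  simp_rw [(hasIntegral_rowInner hX.boundedMeasurable hX _).2, integral_zero]

theorem hasIntegral_rowInner_mul_rowInner (hX : IsSawtoothKernel μ κ X)
    (hY : IsSawtoothKernel μ κ' Y) :
    HasIntegral (fun z : α × α ↦ rowInner μ X X z.1 z.2 * rowInner μ Y Y z.1 z.2)
      (∫ z : α × α, rowInner μ X Y z.1 z.2 ^ 2 ∂(μ.prod μ)) (μ.prod μ) := by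
  refine ⟨((boundedMeasurable_rowInner hX.boundedMeasurable hX.boundedMeasurable).mul
    (boundedMeasurable_rowInner hY.boundedMeasurable hY.boundedMeasurable)).integrable _, ?_⟩
  rw [integral_rowInner_mul_rowInner hX.boundedMeasurable hY.boundedMeasurable]
  simp_rw [hX.antisymm _ (Prod.fst _), hY.antisymm _ (Prod.snd _), neg_mul_neg, rowInner]

theorem hasIntegral_sq_mul_sq (hX : IsSawtoothKernel μ κ X) (hY : IsSawtoothKernel μ κ' Y) :
    HasIntegral (fun z : α × α ↦ X z.1 z.2 ^ 2 * Y z.1 z.2 ^ 2)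
      (κ * κ' + 4 * ∫ z : α × α, rowInner μ X Y z.1 z.2 ^ 2 ∂(μ.prod μ)) (μ.prod μ) := by
  have sq_ae_prod {c : ℝ} {Z : α → α → ℝ} (hZ : IsSawtoothKernel μ c Z) :
      ∀ᵐ z ∂μ.prod μ, Z z.1 z.2 ^ 2 = c + 2 * rowInner μ Z Z z.1 z.2 :=
    (Measure.ae_prod_iff_ae_ae (measurableSet_eq_fun hZ.boundedMeasurable.sq.1
      ((BoundedMeasurable.const c).add ((BoundedMeasurable.const 2).mul
        (boundedMeasurable_rowInner hZ.boundedMeasurable hZ.boundedMeasurable))).1)).2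
      (.of_forall hZ.sq_ae)
  refine ((((HasIntegral.const _ (κ * κ')).add (hY.hasIntegral_rowInner_prod.const_mul (2 * κ))).add
    (hX.hasIntegral_rowInner_prod.const_mul (2 * κ'))).add
    ((hX.hasIntegral_rowInner_mul_rowInner hY).const_mul 4)).congr_ae ?_ |>.congr
    (fun _ ↦ rfl) (by ring)
  filter_upwards [sq_ae_prod hX, sq_ae_prod hY] with z hXz hYz
  rw [hXz, hYz]
  ring

theorem hasIntegral_integral_sq_sub_mul_sq_sub (hX : IsSawtoothKernel μ κ X)
    (hY : IsSawtoothKernel μ κ' Y) :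
    HasIntegral
      (fun z : α × α ↦ ∫ r, (X z.1 r - X z.2 r) ^ 2 * (Y z.1 r - Y z.2 r) ^ 2 ∂μ)
      (4 * (κ * κ') + 8 * ∫ z : α × α, rowInner μ X Y z.1 z.2 ^ 2 ∂(μ.prod μ)
        + 4 * ∫ r, rowInner μ X Y r r ^ 2 ∂μ) (μ.prod μ) := by
  have hdiff {c : ℝ} {Z : α → α → ℝ} (hZ : IsSawtoothKernel μ c Z) :
      BoundedMeasurable fun w : (α × α) × α ↦ (Z w.1.1 w.2 - Z w.1.2 w.2) ^ 2 :=
    ((hZ.boundedMeasurable.comp₂ (by fun_prop) (by fun_prop)).sub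
      (hZ.boundedMeasurable.comp₂ (by fun_prop) (by fun_prop))).sq
  have hF : BoundedMeasurable (Function.uncurry fun (z : α × α) r ↦
      (X z.1 r - X z.2 r) ^ 2 * (Y z.1 r - Y z.2 r) ^ 2) := (hdiff hX).mul (hdiff hY)
  refine ⟨(hF.integral μ).integrable _, ?_⟩
  rw [integral_integral_swap (hF.integrable _)]
  have inner (r : α) : ∫ z : α × α, (X z.1 r - X z.2 r) ^ 2 * (Y z.1 r - Y z.2 r) ^ 2 ∂(μ.prod μ) =
      2 * ∫ p, X r p ^ 2 * Y r p ^ 2 ∂μ + 2 * (κ * κ') + 4 * rowInner μ X Y r r ^ 2 := by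
    have h := (hasIntegral_sq_sub_mul_sq_sub (hX.boundedMeasurable_right r)
      (hY.boundedMeasurable_right r) (hX.integral_eq_zero r) (hY.integral_eq_zero r)).2
    rw [hX.integral_sq, hY.integral_sq] at h
    rw [rowInner, ← h]
    refine integral_congr_ae (.of_forall fun z ↦ ?_)
    simp only [hX.antisymm _ r, hY.antisymm _ r]
    ring
  have hfourth : HasIntegral (fun r ↦ ∫ p, X r p ^ 2 * Y r p ^ 2 ∂μ)
      (κ * κ' + 4 * ∫ z : α × α, rowInner μ X Y z.1 z.2 ^ 2 ∂(μ.prod μ)) μ := by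
    obtain ⟨hint, hval⟩ := hX.hasIntegral_sq_mul_sq hY
    exact ⟨hint.integral_prod_left, by rw [← hval, integral_prod _ hint]⟩
  have hdiag : BoundedMeasurable fun r ↦ rowInner μ X Y r r :=
    (boundedMeasurable_rowInner hX.boundedMeasurable hY.boundedMeasurable).comp₂ (by fun_prop)
      (by fun_prop)
  simp_rw [inner]
  rw [(((hfourth.const_mul 2).add (.const μ _)).add ((hdiag.sq.hasIntegral μ).const_mul 4)).2]
  ring

theorem integral_sq_crossDiff_mul_sq_crossDiff_right (hX : IsSawtoothKernel μ κ X)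
    (hY : IsSawtoothKernel μ κ' Y) (z : α × α) :
    ∫ w, crossDiff X z w ^ 2 * crossDiff Y z w ^ 2 ∂(μ.prod μ) =
      2 * ∫ r, (X z.1 r - X z.2 r) ^ 2 * (Y z.1 r - Y z.2 r) ^ 2 ∂μ
        + 8 * ((κ - rowInner μ X X z.1 z.2) * (κ' - rowInner μ Y Y z.1 z.2))
        + 4 * crossDiff (rowInner μ X Y) z z ^ 2 := by
  have hmul (p q : α) : HasIntegral (fun r ↦ X p r * Y q r) (rowInner μ X Y p q) μ :=
    ((hX.boundedMeasurable_right p).mul (hY.boundedMeasurable_right q)).hasIntegral μ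
  have hdiff {c : ℝ} {Z : α → α → ℝ} (hZ : IsSawtoothKernel μ c Z) :
      BoundedMeasurable fun r ↦ Z z.1 r - Z z.2 r :=
    (hZ.boundedMeasurable_right _).sub (hZ.boundedMeasurable_right _)
  have hmean {c : ℝ} {Z : α → α → ℝ} (hZ : IsSawtoothKernel μ c Z) :
      ∫ r, (Z z.1 r - Z z.2 r) ∂μ = 0 := by
    rw [integral_sub ((hZ.boundedMeasurable_right _).integrable μ)
      ((hZ.boundedMeasurable_right _).integrable μ), hZ.integral_eq_zero, hZ.integral_eq_zero,
      sub_zero]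
  have hsq {c : ℝ} {Z : α → α → ℝ} (hZ : IsSawtoothKernel μ c Z) :
      ∫ r, (Z z.1 r - Z z.2 r) ^ 2 ∂μ = 2 * (c - rowInner μ Z Z z.1 z.2) := by
    have hrow (p : α) : HasIntegral (fun r ↦ Z p r ^ 2) c μ :=
      ⟨(hZ.boundedMeasurable_right p).sq.integrable μ, hZ.integral_sq p⟩
    have hcross : HasIntegral (fun r ↦ Z z.1 r * Z z.2 r) (rowInner μ Z Z z.1 z.2) μ :=
      ((hZ.boundedMeasurable_right _).mul (hZ.boundedMeasurable_right _)).hasIntegral μ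
    exact ((((hrow z.1).add (hrow z.2)).sub (hcross.const_mul 2)).congr (fun r ↦ by ring)
      (by ring)).2
  have hcov : ∫ r, (X z.1 r - X z.2 r) * (Y z.1 r - Y z.2 r) ∂μ =
      crossDiff (rowInner μ X Y) z z :=
    ((((hmul z.1 z.1).sub (hmul z.2 z.1)).sub (hmul z.1 z.2)).add (hmul z.2 z.2)).congr
      (fun r ↦ by ring) rfl |>.2
  have h := (hasIntegral_sq_sub_mul_sq_sub (hdiff hX) (hdiff hY) (hmean hX) (hmean hY)).2
  rw [hsq hX, hsq hY, hcov] at h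
  convert h using 2
  · ext w
    simp only [crossDiff]
    ring
  · ring

theorem integral_sq_crossDiff_mul_sq_crossDiff (hX : IsSawtoothKernel μ κ X)
    (hY : IsSawtoothKernel μ κ' Y) :
    ∫ z, ∫ w, crossDiff X z w ^ 2 * crossDiff Y z w ^ 2 ∂(μ.prod μ) ∂(μ.prod μ) =
      16 * (κ * κ') + 24 * ∫ z : α × α, rowInner μ X Y z.1 z.2 ^ 2 ∂(μ.prod μ)
        + 8 * ∫ r, rowInner μ X Y r r ^ 2 ∂μ
        + 4 * ∫ z, crossDiff (rowInner μ X Y) z z ^ 2 ∂(μ.prod μ) := by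
  have hinner := boundedMeasurable_rowInner (μ := μ) hX.boundedMeasurable hY.boundedMeasurable
  have hcross : BoundedMeasurable fun z : α × α ↦ crossDiff (rowInner μ X Y) z z :=
    (((hinner.comp₂ measurable_fst measurable_fst).sub
      (hinner.comp₂ measurable_snd measurable_fst)).sub
      (hinner.comp₂ measurable_fst measurable_snd)).add
      (hinner.comp₂ measurable_snd measurable_snd)
  have hprod := (((HasIntegral.const (μ.prod μ) (κ * κ')).sub
    (hY.hasIntegral_rowInner_prod.const_mul κ)).sub
    (hX.hasIntegral_rowInner_prod.const_mul κ')).add (hX.hasIntegral_rowInner_mul_rowInner hY)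
  simp_rw [hX.integral_sq_crossDiff_mul_sq_crossDiff_right hY]
  exact ((((hX.hasIntegral_integral_sq_sub_mul_sq_sub hY).const_mul 2).add
    (hprod.const_mul 8)).add ((hcross.sq.hasIntegral (μ.prod μ)).const_mul 4)).congr
    (fun z ↦ by ring) (by ring) |>.2

end IsSawtoothKernel

end SawtoothKernel

section Sawtooth

/-- The `1`-periodic sawtooth function, equal to `t - 1 / 2` on the open unit interval. Its value at
integers is set to `0`, so that it is odd. -/
noncomputable def sawtooth (t : ℝ) : ℝ :=
  (Int.fract t - Int.fract (-t)) / 2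

theorem sawtooth_neg (t : ℝ) : sawtooth (-t) = -sawtooth t := by
  simp only [sawtooth, neg_neg]
  ring

theorem sawtooth_periodic : Function.Periodic sawtooth 1 := fun t ↦ by
  simp only [sawtooth, neg_add, Int.fract_add_one, ← sub_eq_add_neg, Int.fract_sub_one]

theorem sawtooth_of_fract_ne_zero {t : ℝ} (ht : Int.fract t ≠ 0) :
    sawtooth t = Int.fract t - 1 / 2 := by
  rw [sawtooth, Int.fract_neg ht]
  ring

theorem sawtooth_of_mem_Ioo {t : ℝ} (ht : t ∈ Set.Ioo 0 1) : sawtooth t = t - 1 / 2 := by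
  have hfract : Int.fract t = t := Int.fract_eq_self.2 ⟨ht.1.le, ht.2⟩
  rw [sawtooth_of_fract_ne_zero (by rw [hfract]; exact ht.1.ne'), hfract]

theorem sawtooth_sub_eq_ite {x y : ℝ} (hne : x ≠ y) (hxy : |x - y| < 1) :
    sawtooth (x - y) = x - y - 1 / 2 + if x < y then 1 else 0 := by
  obtain ⟨h₁, h₂⟩ := abs_lt.1 hxy
  rcases hne.lt_or_gt with hlt | hgt
  · rw [← neg_sub, sawtooth_neg, sawtooth_of_mem_Ioo ⟨by linarith, by linarith⟩, if_pos hlt]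
    ring
  · rw [sawtooth_of_mem_Ioo ⟨by linarith, h₂⟩, if_neg hgt.not_gt, add_zero]

theorem sq_sawtooth_add_sub {s t : ℝ} (hs : Int.fract s ≠ 0) (ht : Int.fract t ≠ 0)
    (hst : Int.fract (s + t) ≠ 0) : (sawtooth s + sawtooth t - sawtooth (s + t)) ^ 2 = 1 / 4 := by
  rw [sawtooth_of_fract_ne_zero hs, sawtooth_of_fract_ne_zero ht, sawtooth_of_fract_ne_zero hst]
  obtain ⟨n, hn⟩ := Int.fract_add s t
  have hlower : (-2 : ℝ) < n := by
    linarith [Int.fract_nonneg (s + t), Int.fract_lt_one s, Int.fract_lt_one t]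
  have hupper : (n : ℝ) < 1 := by
    linarith [Int.fract_lt_one (s + t), Int.fract_nonneg s, Int.fract_nonneg t]
  obtain rfl | rfl : n = -1 ∨ n = 0 := by norm_cast at hlower hupper; omega
  all_goals
    rw [eq_add_of_sub_eq (eq_add_of_sub_eq hn)]
    norm_num
    ring

theorem boundedMeasurable_sawtooth : BoundedMeasurable sawtooth := by
  refine ⟨(measurable_fract.sub measurable_neg.fract).div_const 2, 1, fun t ↦ ?_⟩
  rw [sawtooth, abs_le]
  constructor <;> linarith [Int.fract_nonneg t, Int.fract_lt_one t, Int.fract_nonneg (-t),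
    Int.fract_lt_one (-t)]

theorem continuousAt_sawtooth {t : ℝ} (ht : Int.fract t ≠ 0) : ContinuousAt sawtooth t := by
  have continuousAt_fract_of_ne {s : ℝ} (hs : Int.fract s ≠ 0) : ContinuousAt Int.fract s :=
    continuousAt_fract fun h ↦ hs (sub_eq_zero.2 h)
  have hneg : ContinuousAt (fun s : ℝ ↦ Int.fract (-s)) t :=
    (continuousAt_fract_of_ne (Int.fract_neg_eq_zero.not.2 ht)).comp continuousAt_neg
  exact ((continuousAt_fract_of_ne ht).sub hneg).div_const 2

theorem ae_fract_sub_ne_zero (ρ : Measure ℝ) [NullSingletonClass ρ] (x : ℝ) :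
    ∀ᵐ t ∂ρ, Int.fract (x - t) ≠ 0 := by
  filter_upwards [(Set.countable_range fun n : ℤ ↦ x - n).ae_notMem ρ] with t ht hfract
  obtain ⟨n, hn⟩ := Int.fract_eq_zero_iff.1 hfract
  exact ht ⟨n, by simp only [hn, sub_sub_cancel]⟩

/-- The uniform distribution on the unit interval, as a measure on the real line. -/
noncomputable abbrev unitUniform : Measure ℝ :=
  volume.restrict (Set.Icc 0 1)

instance isProbabilityMeasure_unitUniform : IsProbabilityMeasure unitUniform :=
  ⟨by simp⟩

theorem ae_unitUniform_mem_Ioo : ∀ᵐ t ∂unitUniform, t ∈ Set.Ioo (0 : ℝ) 1 := by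
  rw [unitUniform, ← restrict_Ioo_eq_restrict_Icc]
  exact ae_restrict_mem measurableSet_Ioo

theorem integral_comp_sawtooth_sub (g : ℝ → ℝ) (x : ℝ) :
    ∫ t, g (sawtooth (x - t)) ∂unitUniform = ∫ t in (0 : ℝ)..1, g (t - 1 / 2) := by
  calc
    _ = ∫ t in (0 : ℝ)..1, g (sawtooth (x - t)) := by
      rw [intervalIntegral.integral_of_le zero_le_one, restrict_Ioc_eq_restrict_Icc]
    _ = ∫ t in (x - 1)..(x - 1 + 1), g (sawtooth t) := by
      rw [intervalIntegral.integral_comp_sub_left fun t ↦ g (sawtooth t)]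
      simp
    _ = ∫ t in (0 : ℝ)..1, g (sawtooth t) := by
      have hper := sawtooth_periodic.comp g
      simpa using hper.intervalIntegral_add_eq (x - 1) 0
    _ = _ := by
      refine intervalIntegral.integral_congr_Ioo_of_le zero_le_one fun t ht ↦ ?_
      simp only [sawtooth_of_mem_Ioo ht]

theorem hasIntegral_sawtooth_sub (x : ℝ) :
    HasIntegral (fun t ↦ sawtooth (x - t)) 0 unitUniform := by
  refine ⟨(boundedMeasurable_sawtooth.comp (by fun_prop)).integrable _, ?_⟩
  refine (integral_comp_sawtooth_sub id x).trans ?_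
  norm_num

theorem hasIntegral_sq_sawtooth_sub (x : ℝ) :
    HasIntegral (fun t ↦ sawtooth (x - t) ^ 2) (1 / 12) unitUniform := by
  refine ⟨(boundedMeasurable_sawtooth.comp (by fun_prop)).sq.integrable _, ?_⟩
  rw [integral_comp_sawtooth_sub (· ^ 2), intervalIntegral.integral_comp_sub_right (· ^ 2)]
  norm_num

theorem sq_sawtooth_sub_eq {x y : ℝ} (hxy : Int.fract (x - y) ≠ 0) :
    sawtooth (x - y) ^ 2 =
      1 / 12 + 2 * ∫ t, sawtooth (x - t) * sawtooth (y - t) ∂unitUniform := by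
  have htriangle : ∀ᵐ t ∂unitUniform,
      (sawtooth (x - t) - sawtooth (y - t) - sawtooth (x - y)) ^ 2 = 1 / 4 := by
    filter_upwards [ae_fract_sub_ne_zero unitUniform x, ae_fract_sub_ne_zero unitUniform y]
      with t hxt hyt
    have h := sq_sawtooth_add_sub hxt (t := t - y) (by rwa [← neg_sub, Int.fract_neg_eq_zero.ne])
      (by rwa [sub_add_sub_cancel])
    rwa [sub_add_sub_cancel, ← neg_sub y t, sawtooth_neg, ← sub_eq_add_neg] at h
  have hmul : HasIntegral (fun t ↦ sawtooth (x - t) * sawtooth (y - t)) _ unitUniform :=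
    BoundedMeasurable.hasIntegral ((boundedMeasurable_sawtooth.comp (by fun_prop)).mul
      (boundedMeasurable_sawtooth.comp (by fun_prop))) _
  have hexpand := (((((hasIntegral_sq_sawtooth_sub x).add (hasIntegral_sq_sawtooth_sub y)).add
    (.const _ (sawtooth (x - y) ^ 2))).sub (hmul.const_mul 2)).add
    (((hasIntegral_sawtooth_sub y).sub (hasIntegral_sawtooth_sub x)).const_mul
      (2 * sawtooth (x - y)))).congr
    (g := fun t ↦ (sawtooth (x - t) - sawtooth (y - t) - sawtooth (x - y)) ^ 2)
    (fun t ↦ by ring) rfl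
  have hquarter := (hexpand.congr_ae htriangle).2.symm.trans (HasIntegral.const _ (1 / 4)).2
  linarith

theorem isSawtoothKernel_sawtooth :
    IsSawtoothKernel unitUniform (1 / 12) fun x y ↦ sawtooth (x - y) where
  boundedMeasurable := boundedMeasurable_sawtooth.comp (measurable_fst.sub measurable_snd)
  antisymm x y := by rw [← sawtooth_neg, neg_sub]
  integral_eq_zero x := (hasIntegral_sawtooth_sub x).2
  sq_ae x := (ae_fract_sub_ne_zero unitUniform x).mono fun _ ↦ sq_sawtooth_sub_eq

end Sawtooth

section Permuton

theorem unitUniform_Iic (x : ℝ) : unitUniform (Set.Iic x) = ENNReal.ofReal (max 0 (min x 1)) := by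
  rw [Measure.restrict_apply measurableSet_Iic, ← Set.Ici_inter_Iic, Set.inter_left_comm,
    Set.Iic_inter_Iic, Set.Ici_inter_Iic, Real.volume_Icc, sub_zero, ENNReal.ofReal_max,
    ENNReal.ofReal_zero, zero_max]

theorem unitUniform_real_Iic (x : ℝ) : unitUniform.real (Set.Iic x) = max 0 (min x 1) := by
  rw [Measure.real, unitUniform_Iic, ENNReal.toReal_ofReal (le_max_left _ _)]

theorem eq_unitUniform {ρ : Measure ℝ} [IsProbabilityMeasure ρ]
    (hρ : ∀ x ∈ Set.Icc (0 : ℝ) 1, ρ (Set.Icc 0 x) = ENNReal.ofReal x) : ρ = unitUniform := by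
  have ae_mem_Icc : ∀ᵐ t ∂ρ, t ∈ Set.Icc (0 : ℝ) 1 :=
    (mem_ae_iff_prob_eq_one measurableSet_Icc).2 (by simp [hρ])
  have ae_ne_zero : ∀ᵐ t ∂ρ, t ≠ 0 := by
    have h := hρ 0 (by simp)
    rwa [Set.Icc_self, ENNReal.ofReal_zero, ← compl_compl {(0 : ℝ)}, ← mem_ae_iff] at h
  refine Measure.ext_of_Iic _ _ fun x ↦ ?_
  have hIic : (Set.Iic x : Set ℝ) =ᵐ[ρ] Set.Icc 0 (max 0 (min x 1)) := by
    filter_upwards [ae_mem_Icc, ae_ne_zero] with t ht ht₀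
    refine propext (?_ : t ≤ x ↔ 0 ≤ t ∧ t ≤ max 0 (min x 1))
    simp [ht.1, ht.2, (ht.1.lt_of_ne' ht₀).not_ge]
  rw [unitUniform_Iic, measure_congr hIic, hρ _ ⟨le_max_left _ _, by simp⟩]

theorem uniformPermuton_eq_prod : uniformPermuton = unitUniform.prod unitUniform :=
  (Measure.prod_restrict _ _).symm

namespace IsPermuton

variable {μ : Measure (ℝ × ℝ)}

theorem ae_mem_square (hμ : IsPermuton μ) :
    ∀ᵐ p ∂μ, p ∈ Set.Icc (0 : ℝ) 1 ×ˢ Set.Icc (0 : ℝ) 1 := by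
  have _ := hμ.1
  refine (mem_ae_iff_prob_eq_one (measurableSet_Icc.prod measurableSet_Icc)).2 ?_
  rw [hμ.2.1 0 1 le_rfl zero_le_one le_rfl, sub_zero, ENNReal.ofReal_one]

theorem measurePreserving_fst (hμ : IsPermuton μ) : MeasurePreserving Prod.fst μ unitUniform := by
  have _ := hμ.1
  have _ : IsProbabilityMeasure (μ.map Prod.fst) :=
    Measure.isProbabilityMeasure_map measurable_fst.aemeasurable
  refine ⟨measurable_fst, eq_unitUniform fun x hx ↦ ?_⟩
  have hstrip : Prod.fst ⁻¹' Set.Icc 0 x =ᵐ[μ] Set.Icc 0 x ×ˢ Set.Icc (0 : ℝ) 1 := by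
    filter_upwards [hμ.ae_mem_square] with p hp
    exact propext (and_iff_left hp.2).symm
  rw [Measure.map_apply measurable_fst measurableSet_Icc, measure_congr hstrip,
    hμ.2.1 0 x le_rfl hx.1 hx.2, sub_zero]

theorem measurePreserving_snd (hμ : IsPermuton μ) : MeasurePreserving Prod.snd μ unitUniform := by
  have _ := hμ.1
  have _ : IsProbabilityMeasure (μ.map Prod.snd) :=
    Measure.isProbabilityMeasure_map measurable_snd.aemeasurable
  refine ⟨measurable_snd, eq_unitUniform fun y hy ↦ ?_⟩
  have hstrip : Prod.snd ⁻¹' Set.Icc 0 y =ᵐ[μ] Set.Icc (0 : ℝ) 1 ×ˢ Set.Icc 0 y := by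
    filter_upwards [hμ.ae_mem_square] with p hp
    exact propext (and_iff_right hp.1).symm
  rw [Measure.map_apply measurable_snd measurableSet_Icc, measure_congr hstrip,
    hμ.2.2 0 y le_rfl hy.1 hy.2, sub_zero]

end IsPermuton

end Permuton

section Discrepancy

theorem prod_eq_of_Iic {ρ σ : Measure ℝ} [IsFiniteMeasure ρ] [IsFiniteMeasure σ]
    {μ : Measure (ℝ × ℝ)}
    (h : ∀ x y, μ (Set.Iic x ×ˢ Set.Iic y) = ρ (Set.Iic x) * σ (Set.Iic y)) : ρ.prod σ = μ := by
  have hborel : MeasurableSpace.generateFrom (Set.range Set.Iic) = Real.measurableSpace := by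
    rw [← borel_eq_generateFrom_Iic, BorelSpace.measurable_eq (α := ℝ)]
  have spanning (τ : Measure ℝ) [IsFiniteMeasure τ] : τ.FiniteSpanningSetsIn (Set.range Set.Iic) :=
    ⟨fun n ↦ Set.Iic n, fun n ↦ ⟨n, rfl⟩, fun _ ↦ measure_lt_top _ _,
      Set.eq_univ_of_forall fun t ↦ Set.mem_iUnion.2 (exists_nat_ge t)⟩
  refine Measure.prod_eq_generateFrom hborel hborel isPiSystem_Iic isPiSystem_Iic (spanning ρ)
    (spanning σ) ?_
  rintro _ ⟨x, rfl⟩ _ ⟨y, rfl⟩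
  exact h x y

/-- The correlation of the two translated sawtooth functions under `μ`. For a permuton it vanishes
identically exactly when `μ` is uniform. -/
noncomputable def discrepancy (μ : Measure (ℝ × ℝ)) (x y : ℝ) : ℝ :=
  ∫ r, sawtooth (x - r.1) * sawtooth (y - r.2) ∂μ

theorem discrepancy_prod (ρ : Measure ℝ) [SFinite ρ] (x y : ℝ) :
    discrepancy (unitUniform.prod ρ) x y = 0 := by
  rw [discrepancy, integral_prod_mul (fun t ↦ sawtooth (x - t)) fun t ↦ sawtooth (y - t),
    (hasIntegral_sawtooth_sub x).2, zero_mul]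

theorem indicator_Iic_eq_sawtooth {t x : ℝ} (ht : t ∈ Set.Ioo (0 : ℝ) 1)
    (htx : t ≠ unitUniform.real (Set.Iic x)) :
    (Set.Iic x).indicator 1 t = unitUniform.real (Set.Iic x) + (sawtooth (0 - t) -
      sawtooth (unitUniform.real (Set.Iic x) - t)) := by
  have hclamp : t ≤ x ↔ ¬unitUniform.real (Set.Iic x) < t := by
    rw [unitUniform_real_Iic]
    simp [ht.2.le, ht.1]
  have hF₀ : 0 ≤ unitUniform.real (Set.Iic x) := measureReal_nonneg
  have hF₁ : unitUniform.real (Set.Iic x) ≤ 1 := measureReal_le_one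
  rw [sawtooth_sub_eq_ite ht.1.ne (abs_lt.2 ⟨by linarith [ht.2], by linarith [ht.1]⟩), if_pos ht.1,
    sawtooth_sub_eq_ite htx.symm (abs_lt.2 ⟨by linarith [ht.2], by linarith [ht.1]⟩)]
  by_cases hlt : unitUniform.real (Set.Iic x) < t
  · rw [if_pos hlt, Set.indicator_of_notMem (s := Set.Iic x) fun h ↦ hclamp.1 h hlt]
    ring
  · rw [if_neg hlt, Set.indicator_of_mem (s := Set.Iic x) (hclamp.2 hlt), Pi.one_apply]
    ring

namespace IsPermuton

variable {μ : Measure (ℝ × ℝ)}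

theorem isSawtoothKernel_fst (hμ : IsPermuton μ) :
    IsSawtoothKernel μ (1 / 12) fun p q ↦ sawtooth (p.1 - q.1) :=
  isSawtoothKernel_sawtooth.comp hμ.measurePreserving_fst

theorem isSawtoothKernel_snd (hμ : IsPermuton μ) :
    IsSawtoothKernel μ (1 / 12) fun p q ↦ sawtooth (p.2 - q.2) :=
  isSawtoothKernel_sawtooth.comp hμ.measurePreserving_snd

theorem continuous_discrepancy (hμ : IsPermuton μ) :
    Continuous (Function.uncurry (discrepancy μ)) := by
  have _ := hμ.1
  obtain ⟨hmeas, C, hC⟩ := boundedMeasurable_sawtooth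
  refine continuous_iff_continuousAt.2 fun z ↦ continuousAt_of_dominated (bound := fun _ ↦ C * C)
    (.of_forall fun w ↦ by fun_prop) (.of_forall fun w ↦ .of_forall fun r ↦ ?_)
    (integrable_const _) ?_
  · rw [norm_mul]
    exact mul_le_mul (hC _) (hC _) (abs_nonneg _) ((abs_nonneg _).trans (hC 0))
  · filter_upwards [hμ.measurePreserving_fst.quasiMeasurePreserving.ae
      (ae_fract_sub_ne_zero unitUniform z.1),
      hμ.measurePreserving_snd.quasiMeasurePreserving.ae (ae_fract_sub_ne_zero unitUniform z.2)]
      with r h₁ h₂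
    exact ((continuousAt_sawtooth h₁).comp (f := fun w : ℝ × ℝ ↦ w.1 - r.1) (by fun_prop)).mul
      ((continuousAt_sawtooth h₂).comp (f := fun w : ℝ × ℝ ↦ w.2 - r.2) (by fun_prop))

theorem discrepancy_eq_zero (hμ : IsPermuton μ)
    (h : ∫ z : (ℝ × ℝ) × (ℝ × ℝ), discrepancy μ z.1.1 z.2.2 ^ 2 ∂(μ.prod μ) = 0) {x y : ℝ}
    (hx : x ∈ Set.Icc (0 : ℝ) 1) (hy : y ∈ Set.Icc (0 : ℝ) 1) : discrepancy μ x y = 0 := by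
  have _ := hμ.1
  have hbdd : BoundedMeasurable fun z : (ℝ × ℝ) × (ℝ × ℝ) ↦ discrepancy μ z.1.1 z.2.2 :=
    boundedMeasurable_rowInner hμ.isSawtoothKernel_fst.boundedMeasurable
      hμ.isSawtoothKernel_snd.boundedMeasurable
  have hae : ∀ᵐ z ∂μ.prod μ, discrepancy μ z.1.1 z.2.2 = 0 := by
    filter_upwards [(integral_eq_zero_iff_of_nonneg (fun _ ↦ sq_nonneg _)
      (hbdd.sq.integrable _)).1 h] with z hz
    exact pow_eq_zero_iff two_ne_zero |>.1 hz
  have hmp := hμ.measurePreserving_fst.prod hμ.measurePreserving_snd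
  have hae_square : Function.uncurry (discrepancy μ) =ᵐ[uniformPermuton] 0 := by
    rw [uniformPermuton_eq_prod, ← hmp.map_eq]
    exact (ae_map_iff hmp.aemeasurable (measurableSet_eq_fun
      hμ.continuous_discrepancy.measurable measurable_const)).2 hae
  have heqOn := Measure.eqOn_of_ae_eq hae_square hμ.continuous_discrepancy.continuousOn
    continuousOn_const
    (by rw [interior_prod_eq, closure_prod_eq, closure_interior_Icc zero_ne_one])
  exact heqOn (Set.mk_mem_prod hx hy)

theorem hasIntegral_indicator_Iic_prod_Iic (hμ : IsPermuton μ)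
    (h : ∀ x ∈ Set.Icc (0 : ℝ) 1, ∀ y ∈ Set.Icc (0 : ℝ) 1, discrepancy μ x y = 0) (x y : ℝ) :
    HasIntegral ((Set.Iic x ×ˢ Set.Iic y).indicator 1)
      (unitUniform.real (Set.Iic x) * unitUniform.real (Set.Iic y)) μ := by
  have _ := hμ.1
  set F := unitUniform.real (Set.Iic x)
  set G := unitUniform.real (Set.Iic y)
  have hF : F ∈ Set.Icc (0 : ℝ) 1 := ⟨measureReal_nonneg, measureReal_le_one⟩
  have hG : G ∈ Set.Icc (0 : ℝ) 1 := ⟨measureReal_nonneg, measureReal_le_one⟩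
  have h₀ : (0 : ℝ) ∈ Set.Icc (0 : ℝ) 1 := Set.left_mem_Icc.2 zero_le_one
  have hfst (c : ℝ) : HasIntegral (fun p : ℝ × ℝ ↦ sawtooth (c - p.1)) 0 μ :=
    ⟨(boundedMeasurable_sawtooth.comp (by fun_prop)).integrable μ,
      hμ.isSawtoothKernel_fst.integral_eq_zero (c, 0)⟩
  have hsnd (d : ℝ) : HasIntegral (fun p : ℝ × ℝ ↦ sawtooth (d - p.2)) 0 μ :=
    ⟨(boundedMeasurable_sawtooth.comp (by fun_prop)).integrable μ,
      hμ.isSawtoothKernel_snd.integral_eq_zero (0, d)⟩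
  have hmul {c d : ℝ} (hc : c ∈ Set.Icc (0 : ℝ) 1) (hd : d ∈ Set.Icc (0 : ℝ) 1) :
      HasIntegral (fun p : ℝ × ℝ ↦ sawtooth (c - p.1) * sawtooth (d - p.2)) 0 μ :=
    ⟨((boundedMeasurable_sawtooth.comp (by fun_prop)).mul
      (boundedMeasurable_sawtooth.comp (by fun_prop))).integrable μ, h c hc d hd⟩
  have hexpand := (((HasIntegral.const μ (F * G)).add
    (((hsnd 0).sub (hsnd G)).const_mul F)).add (((hfst 0).sub (hfst F)).const_mul G)).add
    (((hmul h₀ h₀).sub (hmul h₀ hG)).sub ((hmul hF h₀).sub (hmul hF hG)))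
  refine (hexpand.congr_ae ?_).congr (fun _ ↦ rfl) (by ring)
  filter_upwards [hμ.measurePreserving_fst.quasiMeasurePreserving.ae ae_unitUniform_mem_Ioo,
    hμ.measurePreserving_fst.quasiMeasurePreserving.ae (Measure.ae_ne unitUniform F),
    hμ.measurePreserving_snd.quasiMeasurePreserving.ae ae_unitUniform_mem_Ioo,
    hμ.measurePreserving_snd.quasiMeasurePreserving.ae (Measure.ae_ne unitUniform G)]
    with p hp₁ hpF hp₂ hpG
  rw [← Prod.mk.eta (p := p), Set.indicator_prod_one, indicator_Iic_eq_sawtooth hp₁ hpF,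
    indicator_Iic_eq_sawtooth hp₂ hpG]
  ring

theorem measure_Iic_prod_Iic (hμ : IsPermuton μ)
    (h : ∀ x ∈ Set.Icc (0 : ℝ) 1, ∀ y ∈ Set.Icc (0 : ℝ) 1, discrepancy μ x y = 0) (x y : ℝ) :
    μ (Set.Iic x ×ˢ Set.Iic y) = unitUniform (Set.Iic x) * unitUniform (Set.Iic y) := by
  have _ := hμ.1
  rw [← ofReal_measureReal, ← ofReal_measureReal, ← ofReal_measureReal,
    ← ENNReal.ofReal_mul measureReal_nonneg, ← (hμ.hasIntegral_indicator_Iic_prod_Iic h x y).2,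
    integral_indicator_one (measurableSet_Iic.prod measurableSet_Iic)]

theorem eq_uniformPermuton (hμ : IsPermuton μ)
    (h : ∫ z : (ℝ × ℝ) × (ℝ × ℝ), discrepancy μ z.1.1 z.2.2 ^ 2 ∂(μ.prod μ) = 0) :
    μ = uniformPermuton := by
  rw [uniformPermuton_eq_prod]
  exact (prod_eq_of_Iic <| hμ.measure_Iic_prod_Iic fun x hx y hy ↦
    hμ.discrepancy_eq_zero h hx hy).symm

end IsPermuton

end Discrepancy

section ProductMeasure

variable {ι κ α : Type*} [Fintype ι] [Fintype κ] [MeasurableSpace α]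

theorem measurePreserving_pi_comp (ρ : Measure α) [IsProbabilityMeasure ρ] {e : ι → κ}
    (he : Function.Injective e) :
    MeasurePreserving (fun p : κ → α ↦ p ∘ e) (Measure.pi fun _ ↦ ρ) (Measure.pi fun _ ↦ ρ) := by
  have hmeas : Measurable fun p : κ → α ↦ p ∘ e :=
    measurable_pi_iff.2 fun i ↦ measurable_pi_apply (e i)
  refine ⟨hmeas, (Measure.pi_eq fun s hs ↦ ?_).symm⟩
  have hpreimage : (fun p : κ → α ↦ p ∘ e) ⁻¹' Set.univ.pi s =
      Set.univ.pi (Function.extend e s fun _ ↦ Set.univ) := by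
    ext p
    simp only [Set.mem_preimage, Set.mem_univ_pi, Function.comp_apply]
    refine ⟨fun h j ↦ ?_, fun h i ↦ by simpa only [he.extend_apply] using h (e i)⟩
    by_cases hj : ∃ i, e i = j
    · obtain ⟨i, rfl⟩ := hj
      simpa only [he.extend_apply] using h i
    · simp only [Function.extend_apply' _ _ _ hj, Set.mem_univ]
  rw [Measure.map_apply hmeas (.univ_pi hs), hpreimage, Measure.pi_pi]
  refine (Fintype.prod_of_injective e he _ _ (fun j hj ↦ ?_) fun i ↦ ?_).symm
  · rw [Function.extend_apply' _ _ _ hj, measure_univ]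
  · rw [he.extend_apply]

theorem ae_pi_injective (ρ : Measure ℝ) [IsProbabilityMeasure ρ] [NullSingletonClass ρ] :
    ∀ᵐ x ∂(Measure.pi fun _ : ι ↦ ρ), Function.Injective x := by
  have hne : ∀ᵐ z ∂ρ.prod ρ, z.1 ≠ z.2 :=
    (Measure.ae_prod_iff_ae_ae (measurableSet_eq_fun measurable_fst measurable_snd).compl).2
      (.of_forall fun s ↦ (Measure.ae_ne ρ s).mono fun _ ↦ Ne.symm)
  have hpair : ∀ i j : ι, ∀ᵐ x ∂(Measure.pi fun _ : ι ↦ ρ), x i = x j → i = j := fun i j ↦ by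
    rcases eq_or_ne i j with rfl | hij
    · exact .of_forall fun _ _ ↦ rfl
    · have hmp := (measurePreserving_finTwoArrow ρ).comp
        (measurePreserving_pi_comp ρ (e := ![i, j]) (by simp [Function.Injective, hij, hij.symm]))
      exact (hmp.quasiMeasurePreserving.ae hne).mono fun x hx h ↦ (hx h).elim
  exact ae_all_iff.2 fun i ↦ ae_all_iff.2 (hpair i)

theorem measurePreserving_prod_prod_vec (ρ : Measure α) [IsProbabilityMeasure ρ] :
    MeasurePreserving (fun z : (α × α) × (α × α) ↦ ![z.1.1, z.1.2, z.2.1, z.2.2])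
      ((ρ.prod ρ).prod (ρ.prod ρ)) (Measure.pi fun _ : Fin 4 ↦ ρ) := by
  have hmeas : Measurable fun z : (α × α) × (α × α) ↦ ![z.1.1, z.1.2, z.2.1, z.2.2] := by
    refine measurable_pi_iff.2 ?_
    simp only [Fin.forall_fin_succ, Matrix.cons_val_zero, Matrix.cons_val_succ, IsEmpty.forall_iff,
      and_true]
    exact ⟨by fun_prop, by fun_prop, by fun_prop, by fun_prop⟩
  refine ⟨hmeas, (Measure.pi_eq fun s hs ↦ ?_).symm⟩
  have hpreimage : (fun z : (α × α) × (α × α) ↦ ![z.1.1, z.1.2, z.2.1, z.2.2]) ⁻¹' Set.univ.pi s =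
      (s 0 ×ˢ s 1) ×ˢ (s 2 ×ˢ s 3) := by
    ext z
    simp [Fin.forall_fin_succ, and_assoc]
  rw [Measure.map_apply hmeas (.univ_pi hs), hpreimage, Measure.prod_prod, Measure.prod_prod,
    Measure.prod_prod, Fin.prod_univ_four, mul_assoc (_ * _)]

end ProductMeasure

section Ranking

variable {k : ℕ}

/-- `ρ i` is the rank of `x i` among the values of `x`. -/
def IsRanking (ρ : Equiv.Perm (Fin k)) (x : Fin k → ℝ) : Prop :=
  ∀ i j, x i < x j ↔ ρ i < ρ j

theorem exists_isRanking {x : Fin k → ℝ} (hx : Function.Injective x) : ∃ ρ, IsRanking ρ x := by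
  have hmono : StrictMono (x ∘ Tuple.sort x) :=
    (Tuple.monotone_sort x).strictMono_of_injective (hx.comp (Tuple.sort x).injective)
  exact ⟨(Tuple.sort x)⁻¹, fun i j ↦ by
    simpa using hmono.lt_iff_lt (a := (Tuple.sort x)⁻¹ i) (b := (Tuple.sort x)⁻¹ j)⟩

theorem IsRanking.comp {ρ : Equiv.Perm (Fin k)} {x : Fin k → ℝ} (h : IsRanking ρ x)
    (σ : Equiv.Perm (Fin k)) : IsRanking (ρ * σ) (x ∘ σ) :=
  fun i j ↦ h (σ i) (σ j)

theorem IsRanking.unique {ρ τ : Equiv.Perm (Fin k)} {x : Fin k → ℝ} (hρ : IsRanking ρ x)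
    (hτ : IsRanking τ x) : ρ = τ := by
  have hmono : StrictMono (ρ * τ⁻¹) := fun i j hij ↦ by
    rw [Equiv.Perm.mul_apply, Equiv.Perm.mul_apply, ← hρ, hτ]
    simpa using hij
  have hid : ⇑(ρ * τ⁻¹) = id :=
    (hmono.range_inj strictMono_id).1 (by simp)
  exact mul_inv_eq_one.1 (Equiv.ext (congrFun hid))

/-- The event, in the definition of `PermutonDensity`, that the points `p` form the pattern `π`. -/
def patternEvent (π : Equiv.Perm (Fin k)) : Set (Fin k → ℝ × ℝ) :=
  {p | ∃ σ : Equiv.Perm (Fin k), StrictMono (fun i ↦ (p (σ i)).1) ∧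
    ∀ i j, (p (σ i)).2 < (p (σ j)).2 ↔ π i < π j}

theorem mem_patternEvent_iff {p : Fin k → ℝ × ℝ} {α β : Equiv.Perm (Fin k)}
    (hα : IsRanking α fun i ↦ (p i).1) (hβ : IsRanking β fun i ↦ (p i).2)
    (π : Equiv.Perm (Fin k)) : p ∈ patternEvent π ↔ π = β * α⁻¹ := by
  constructor
  · rintro ⟨σ, hσ, hπ⟩
    have hασ : α * σ = 1 := (hα.comp σ).unique fun i j ↦ hσ.lt_iff_lt
    have hβσ : β * σ = π := (hβ.comp σ).unique hπ
    rw [← hβσ, eq_inv_of_mul_eq_one_right hασ]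
  · rintro rfl
    exact ⟨α⁻¹, fun i j hij ↦ (hα.comp α⁻¹ i j).2 (by simpa using hij), hβ.comp α⁻¹⟩

theorem measurableSet_patternEvent (π : Equiv.Perm (Fin k)) : MeasurableSet (patternEvent π) := by
  refine measurableSet_setOfPred.2 (.exists fun σ ↦ .and ?_ ?_)
  · exact .forall fun i ↦ .forall fun j ↦ .imp measurable_const
      (measurableSet_setOfPred.1 (measurableSet_lt (by fun_prop) (by fun_prop)))
  · exact .forall fun i ↦ .forall fun j ↦ .iff
      (measurableSet_setOfPred.1 (measurableSet_lt (by fun_prop) (by fun_prop))) measurable_const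

theorem IsPermuton.sum_permutonDensity {μ : Measure (ℝ × ℝ)} (hμ : IsPermuton μ)
    {S : Finset (Equiv.Perm (Fin k))} {f : (Fin k → ℝ × ℝ) → ℝ}
    (hf : ∀ᵐ p ∂(Measure.pi fun _ ↦ μ), ∀ α β, IsRanking α (fun i ↦ (p i).1) →
      IsRanking β (fun i ↦ (p i).2) → f p = if β * α⁻¹ ∈ S then 1 else 0) :
    ∑ π ∈ S, PermutonDensity π μ = ∫ p, f p ∂(Measure.pi fun _ ↦ μ) := by
  have _ := hμ.1
  have hfst := measurePreserving_pi (fun _ : Fin k ↦ μ) _ fun _ ↦ hμ.measurePreserving_fst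
  have hsnd := measurePreserving_pi (fun _ : Fin k ↦ μ) _ fun _ ↦ hμ.measurePreserving_snd
  calc
    _ = ∑ π ∈ S, ∫ p, (patternEvent π).indicator 1 p ∂(Measure.pi fun _ ↦ μ) :=
      Finset.sum_congr rfl fun π _ ↦ (integral_indicator_one (measurableSet_patternEvent π)).symm
    _ = ∫ p, ∑ π ∈ S, (patternEvent π).indicator 1 p ∂(Measure.pi fun _ ↦ μ) :=
      (integral_finsetSum _ fun π _ ↦
        (integrable_const (1 : ℝ)).indicator (measurableSet_patternEvent π)).symm
    _ = _ := integral_congr_ae ?_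
  filter_upwards [hf, hfst.quasiMeasurePreserving.ae (ae_pi_injective unitUniform),
    hsnd.quasiMeasurePreserving.ae (ae_pi_injective unitUniform)] with p hp hp₁ hp₂
  classical
  obtain ⟨α, hα⟩ := exists_isRanking hp₁
  obtain ⟨β, hβ⟩ := exists_isRanking hp₂
  simp only [hp α β hα hβ, Set.indicator_apply, mem_patternEvent_iff hα hβ, Pi.one_apply,
    Finset.sum_ite_eq']

end Ranking

section DiagonalPatterns

/-- The symmetries of the square with vertices `0, 1, 2, 3` in cyclic order, written as the
permutations which preserve its pair of diagonals. -/
def diagonalPatterns : Finset (Equiv.Perm (Fin 4)) :=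
  Finset.univ.filter fun π ↦ ∀ a, π (a + 2) = π a + 2

theorem diagonalPatterns_eq : diagonalPatterns = {
    mk4 0 1 2 3, mk4 0 3 2 1, mk4 1 0 3 2, mk4 1 2 3 0,
    mk4 2 1 0 3, mk4 2 3 0 1, mk4 3 0 1 2, mk4 3 2 1 0} := by
  decide +kernel

theorem mem_diagonalPatterns_iff (π : Equiv.Perm (Fin 4)) (a : Fin 4) :
    π ∈ diagonalPatterns ↔ π (a + 2) = π a + 2 := by
  decide +revert +kernel

theorem sum_diagonal_mul_diagonal (α β : Equiv.Perm (Fin 4)) :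
    ∑ j : Fin 3, (if α j.succ = α 0 + 2 then (1 : ℝ) else 0) *
      (if β j.succ = β 0 + 2 then 1 else 0) = if β * α⁻¹ ∈ diagonalPatterns then 1 else 0 := by
  obtain ⟨j, hj⟩ : ∃ j : Fin 3, α j.succ = α 0 + 2 := by
    have hne : α.symm (α 0 + 2) ≠ 0 := fun h ↦ by simp [Equiv.symm_apply_eq] at h
    obtain ⟨j, hj⟩ := Fin.exists_succ_eq.2 hne
    exact ⟨j, by rw [hj, Equiv.apply_symm_apply]⟩
  rw [Finset.sum_eq_single j]
  · have hmem : β * α⁻¹ ∈ diagonalPatterns ↔ β j.succ = β 0 + 2 := by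
      rw [mem_diagonalPatterns_iff _ (α 0), ← hj]
      simp
    rw [if_pos hj, one_mul]
    exact if_congr hmem.symm rfl rfl
  · intro i _ hij
    rw [if_neg fun hi ↦ hij (Fin.succ_injective _ (α.injective (hi.trans hj.symm))), zero_mul]
  · exact fun h ↦ (h (Finset.mem_univ j)).elim

/-- The indicator that the chords `x 0`–`x 1` and `x 2`–`x 3` of the circle `ℝ / ℤ` cross. -/
noncomputable def crossing (x : Fin 4 → ℝ) : ℝ :=
  crossDiff (fun s t ↦ sawtooth (s - t)) (x 0, x 1) (x 2, x 3) ^ 2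

theorem boundedMeasurable_crossing : BoundedMeasurable crossing := by
  have h (i j : Fin 4) : BoundedMeasurable fun x : Fin 4 → ℝ ↦ sawtooth (x i - x j) :=
    boundedMeasurable_sawtooth.comp (by fun_prop)
  exact ((((h 0 2).sub (h 1 2)).sub (h 0 3)).add (h 1 3)).sq

theorem IsRanking.crossing_eq {ρ : Equiv.Perm (Fin 4)} {x : Fin 4 → ℝ} (hρ : IsRanking ρ x)
    (hx : ∀ i, x i ∈ Set.Ioo (0 : ℝ) 1) : crossing x = if ρ 1 = ρ 0 + 2 then 1 else 0 := by
  have hsawtooth {i j : Fin 4} (hij : i ≠ j) :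
      sawtooth (x i - x j) = x i - x j - 1 / 2 + if ρ i < ρ j then 1 else 0 := by
    have hne : x i ≠ x j := fun h ↦ hij <| ρ.injective <|
      le_antisymm (not_lt.1 <| (hρ j i).not.1 h.not_gt) (not_lt.1 <| (hρ i j).not.1 h.not_lt)
    rw [sawtooth_sub_eq_ite hne (abs_lt.2 ⟨by linarith [(hx i).1, (hx j).2],
      by linarith [(hx i).2, (hx j).1]⟩)]
    simp only [hρ i j]
  have hsigns : ∀ ρ : Equiv.Perm (Fin 4),
      ((if ρ 0 < ρ 2 then 1 else 0) - (if ρ 1 < ρ 2 then 1 else 0) - (if ρ 0 < ρ 3 then 1 else 0) +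
        (if ρ 1 < ρ 3 then 1 else 0) : ℤ) ^ 2 = if ρ 1 = ρ 0 + 2 then 1 else 0 := by
    decide +kernel
  have hcast := congrArg (Int.cast : ℤ → ℝ) (hsigns ρ)
  push_cast at hcast
  rw [← hcast, crossing, crossDiff, hsawtooth (by decide), hsawtooth (by decide),
    hsawtooth (by decide), hsawtooth (by decide)]
  ring

theorem sum_crossing_mul_crossing {p : Fin 4 → ℝ × ℝ} {α β : Equiv.Perm (Fin 4)}
    (hα : IsRanking α fun i ↦ (p i).1) (hβ : IsRanking β fun i ↦ (p i).2)
    (hp₁ : ∀ i, (p i).1 ∈ Set.Ioo (0 : ℝ) 1) (hp₂ : ∀ i, (p i).2 ∈ Set.Ioo (0 : ℝ) 1) :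
    ∑ j : Fin 3, crossing (fun i ↦ (p (Equiv.swap 1 j.succ i)).1) *
      crossing (fun i ↦ (p (Equiv.swap 1 j.succ i)).2) =
        if β * α⁻¹ ∈ diagonalPatterns then 1 else 0 := by
  rw [← sum_diagonal_mul_diagonal]
  refine Finset.sum_congr rfl fun j _ ↦ ?_
  have hswap : Equiv.swap 1 j.succ 0 = 0 :=
    Equiv.swap_apply_of_ne_of_ne (by decide) (Fin.succ_ne_zero j).symm
  have h₁ := (hα.comp (Equiv.swap 1 j.succ)).crossing_eq fun i ↦ hp₁ _
  have h₂ := (hβ.comp (Equiv.swap 1 j.succ)).crossing_eq fun i ↦ hp₂ _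
  rw [Equiv.Perm.mul_apply, Equiv.Perm.mul_apply, hswap, Equiv.swap_apply_left] at h₁ h₂
  exact congrArg₂ (· * ·) h₁ h₂

theorem IsPermuton.sum_permutonDensity_diagonalPatterns {μ : Measure (ℝ × ℝ)}
    (hμ : IsPermuton μ) :
    ∑ π ∈ diagonalPatterns, PermutonDensity π μ =
      3 * ∫ z, ∫ w, crossDiff (fun p q : ℝ × ℝ ↦ sawtooth (p.1 - q.1)) z w ^ 2 *
        crossDiff (fun p q : ℝ × ℝ ↦ sawtooth (p.2 - q.2)) z w ^ 2 ∂(μ.prod μ) ∂(μ.prod μ) := by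
  have _ := hμ.1
  let f (p : Fin 4 → ℝ × ℝ) : ℝ := crossing (fun i ↦ (p i).1) * crossing (fun i ↦ (p i).2)
  have hf : BoundedMeasurable f :=
    (boundedMeasurable_crossing.comp (by fun_prop)).mul
      (boundedMeasurable_crossing.comp (by fun_prop))
  have hcoord (i : Fin 4) := measurePreserving_eval (fun _ : Fin 4 ↦ μ) i
  have hswap (j : Fin 3) :=
    measurePreserving_pi_comp μ (Equiv.swap (1 : Fin 4) j.succ).injective
  have hvec := measurePreserving_prod_prod_vec μ
  have hprod : ∫ p, f p ∂(Measure.pi fun _ ↦ μ) = _ :=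
    (hf.integral_comp hvec).symm.trans
      (integral_prod _ ((hf.comp hvec.measurable).integrable _))
  calc
    _ = ∫ p, ∑ j : Fin 3, f (p ∘ Equiv.swap 1 j.succ) ∂(Measure.pi fun _ ↦ μ) := by
      refine hμ.sum_permutonDensity ?_
      filter_upwards [ae_all_iff.2 fun i ↦ (hμ.measurePreserving_fst.comp
          (hcoord i)).quasiMeasurePreserving.ae ae_unitUniform_mem_Ioo,
        ae_all_iff.2 fun i ↦ (hμ.measurePreserving_snd.comp
          (hcoord i)).quasiMeasurePreserving.ae ae_unitUniform_mem_Ioo] with p hp₁ hp₂ α β hα hβ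
      exact sum_crossing_mul_crossing hα hβ hp₁ hp₂
    _ = ∑ _j : Fin 3, ∫ p, f p ∂(Measure.pi fun _ ↦ μ) := by
      rw [integral_finsetSum _ fun j _ ↦ (hf.comp (hswap j).measurable).integrable _]
      exact Finset.sum_congr rfl fun j _ ↦ hf.integral_comp (hswap j)
    _ = _ := by
      rw [Fin.sum_const, nsmul_eq_mul, hprod]
      rfl

theorem IsPermuton.sum_permutonDensity_diagonalPatterns_eq_add {μ : Measure (ℝ × ℝ)}
    (hμ : IsPermuton μ) :
    ∑ π ∈ diagonalPatterns, PermutonDensity π μ =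
      1 / 3 + 72 * ∫ z : (ℝ × ℝ) × (ℝ × ℝ), discrepancy μ z.1.1 z.2.2 ^ 2 ∂(μ.prod μ)
        + 24 * ∫ r, discrepancy μ r.1 r.2 ^ 2 ∂μ
        + 12 * ∫ z, crossDiff (fun p q : ℝ × ℝ ↦ discrepancy μ p.1 q.2) z z ^ 2 ∂(μ.prod μ) := by
  have _ := hμ.1
  rw [hμ.sum_permutonDensity_diagonalPatterns,
    hμ.isSawtoothKernel_fst.integral_sq_crossDiff_mul_sq_crossDiff hμ.isSawtoothKernel_snd]
  unfold discrepancy rowInner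
  ring

end DiagonalPatterns

theorem statement_8 (μ : Measure (ℝ × ℝ)) (hμ : IsPermuton μ) :
    (1 / 3 : ℝ) ≤ ∑ π ∈ ({
        mk4 0 1 2 3,
        mk4 0 3 2 1,
        mk4 1 0 3 2,
        mk4 1 2 3 0,
        mk4 2 1 0 3,
        mk4 2 3 0 1,
        mk4 3 0 1 2,
        mk4 3 2 1 0} : Finset (Equiv.Perm (Fin 4))), PermutonDensity π μ ∧
      (∑ π ∈ ({
        mk4 0 1 2 3,
        mk4 0 3 2 1,
        mk4 1 0 3 2,
        mk4 1 2 3 0,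
        mk4 2 1 0 3,
        mk4 2 3 0 1,
        mk4 3 0 1 2,
        mk4 3 2 1 0} : Finset (Equiv.Perm (Fin 4))), PermutonDensity π μ = (1 / 3 : ℝ) ↔
        μ = uniformPermuton) := by
  have hprod : 0 ≤ ∫ z : (ℝ × ℝ) × (ℝ × ℝ), discrepancy μ z.1.1 z.2.2 ^ 2 ∂(μ.prod μ) :=
    integral_nonneg fun _ ↦ sq_nonneg _
  have hdiag : 0 ≤ ∫ r, discrepancy μ r.1 r.2 ^ 2 ∂μ := integral_nonneg fun _ ↦ sq_nonneg _
  have hcross : 0 ≤ ∫ z, crossDiff (fun p q : ℝ × ℝ ↦ discrepancy μ p.1 q.2) z z ^ 2 ∂(μ.prod μ) :=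
    integral_nonneg fun _ ↦ sq_nonneg _
  rw [← diagonalPatterns_eq, hμ.sum_permutonDensity_diagonalPatterns_eq_add]
  refine ⟨by linarith, fun h ↦ hμ.eq_uniformPermuton (by linarith), fun h ↦ ?_⟩
  rw [h, uniformPermuton_eq_prod]
  simp [discrepancy_prod, crossDiff]
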